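/- Let W_2 be the 4×4 matrix with rows (1,1,0,−1), (0,0,1,0), (0,0,1,0), (0,0,1,0), and let Z_{w,2} = Σ_{i,j} [W_2]_{ij} Π_i⊗Π_j (first Bell projector on qubits A'B', second on A''B''). Then Z_{w,2} is an entanglement witness for the partition A=(A',A''), B=(B',B''): tr(Z_{w,2} ρ) ≥ 0 for every 16×16 matrix ρ that is separable across this partition. -/

import Mathlib

open Matrix Complex
open scoped Kronecker ComplexOrder

noncomputable section
namespace Paper

abbrev Q2 := Fin 2 × Fin 2
abbrev M4 := Matrix Q2 Q2 ℂ
abbrev M16 := Matrix (Q2 × Q2) (Q2 × Q2) ℂ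

/-- `1/√2` as a complex number. -/
def invSqrt2 : ℂ := ((Real.sqrt 2)⁻¹ : ℝ)

/-- The four Bell states `|Φ₁⟩,…,|Φ₄⟩` as vectors in `ℂ²⊗ℂ²`
(product basis indexed by `Fin 2 × Fin 2`). -/
def bell : Fin 4 → Q2 → ℂ :=
  ![fun p => !![invSqrt2, 0; 0, invSqrt2] p.1 p.2,
    fun p => !![invSqrt2, 0; 0, -invSqrt2] p.1 p.2,
    fun p => !![0, invSqrt2; invSqrt2, 0] p.1 p.2,
    fun p => !![0, invSqrt2; -invSqrt2, 0] p.1 p.2]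

/-- The Bell projectors `Π_i = |Φ_i⟩⟨Φ_i|`. -/
def BellProj (i : Fin 4) : M4 := vecMulVec (bell i) (star (bell i))

/-- The Pauli matrices `σ_x, σ_y, σ_z`. -/
def pauli : Fin 3 → Matrix (Fin 2) (Fin 2) ℂ :=
  ![!![0, 1; 1, 0], !![0, -I; I, 0], !![1, 0; 0, -1]]

/-- Reindexing `((a',b'),(a'',b'')) ↦ ((a',a''),(b',b''))`. -/
def swapMid : (Q2 × Q2) ≃ (Q2 × Q2) where
  toFun p := ((p.1.1, p.2.1), (p.1.2, p.2.2))
  invFun p := ((p.1.1, p.2.1), (p.1.2, p.2.2))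
  left_inv _ := rfl
  right_inv _ := rfl

/-- The rank-one matrix `x x†`. -/
def pureMat {d : Type*} (x : d → ℂ) : Matrix d d ℂ := vecMulVec x (star x)

/-- Separability of a 16×16 four-qubit matrix (qubit order A',B',A'',B'')
across the partition A = (A',A''), B = (B',B''). -/
def SepAB (ρ : M16) : Prop :=
  ∃ (n : ℕ) (x y : Fin n → Q2 → ℂ),
    (Matrix.reindex swapMid swapMid ρ) = ∑ k, (pureMat (x k)) ⊗ₖ (pureMat (y k))


/-- The witness matrix `W2`. -/
def W2 : Matrix (Fin 4) (Fin 4) ℝ :=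
  !![1, 1, 0, -1; 0, 0, 1, 0; 0, 0, 1, 0; 0, 0, 1, 0]

/-- Product vector in the order A',B',A'',B''. -/
def pv (x y : Q2 → ℂ) : Q2 × Q2 → ℂ := fun p => x (p.1.1, p.2.1) * y (p.1.2, p.2.2)

def bb (i j : Fin 4) : Q2 × Q2 → ℂ := fun p => bell i p.1 * bell j p.2

/-- overlap amplitude -/
def amp (i j : Fin 4) (x y : Q2 → ℂ) : ℂ := star (bb i j) ⬝ᵥ pv x y

lemma bellkron (i j : Fin 4) :
    BellProj i ⊗ₖ BellProj j = vecMulVec (bb i j) (star (bb i j)) := by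
  ext p q
  simp [BellProj, bb, kroneckerMap_apply, vecMulVec_apply]
  ring

lemma rho_eq (ρ : M16) {n : ℕ} (x y : Fin n → Q2 → ℂ)
    (h : (Matrix.reindex swapMid swapMid ρ) = ∑ k, (pureMat (x k)) ⊗ₖ (pureMat (y k))) :
    ρ = ∑ k, vecMulVec (pv (x k) (y k)) (star (pv (x k) (y k))) := by
  ext p q
  have h2 := congrFun (congrFun h (swapMid p)) (swapMid q)
  simp only [reindex_apply, submatrix_apply, Equiv.symm_apply_apply] at h2
  rw [h2, Matrix.sum_apply, Matrix.sum_apply]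
  refine Finset.sum_congr rfl fun k _ => ?_
  simp [pureMat, pv, kroneckerMap_apply, vecMulVec_apply, swapMid]
  ring

lemma trace_rank1 (u v : Q2 × Q2 → ℂ) :
    (vecMulVec u (star u) * vecMulVec v (star v)).trace
      = ((‖star u ⬝ᵥ v‖ ^ 2 : ℝ) : ℂ) := by
  rw [vecMulVec_mul_vecMulVec, trace_vecMulVec, dotProduct_smul]
  have : u ⬝ᵥ star v = star (star u ⬝ᵥ v) := by
    simp [dotProduct]
  rw [this]
  simp [Complex.mul_conj']

lemma s2 : star invSqrt2 = invSqrt2 := by simp [invSqrt2]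
lemma s2' : (starRingEnd ℂ) invSqrt2 = invSqrt2 := by simp [invSqrt2]

lemma amp_key (x y : Q2 → ℂ) :
    amp 0 3 x y ^ 2 = - amp 0 0 x y ^ 2 + amp 0 1 x y ^ 2 + amp 1 2 x y ^ 2
      + amp 2 2 x y ^ 2 - amp 3 2 x y ^ 2 := by
  simp [amp, bb, pv, bell, dotProduct, Fintype.sum_prod_type, Fin.sum_univ_two, s2']
  ring

lemma amp_ineq (x y : Q2 → ℂ) :
    0 ≤ ‖amp 0 0 x y‖ ^ 2 + ‖amp 0 1 x y‖ ^ 2 - ‖amp 0 3 x y‖ ^ 2 + ‖amp 1 2 x y‖ ^ 2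
      + ‖amp 2 2 x y‖ ^ 2 + ‖amp 3 2 x y‖ ^ 2 := by
  have h := congrArg norm (amp_key x y)
  simp only [norm_pow] at h
  have h1 := norm_sub_le (- amp 0 0 x y ^ 2 + amp 0 1 x y ^ 2 + amp 1 2 x y ^ 2
      + amp 2 2 x y ^ 2) (amp 3 2 x y ^ 2)
  have h2 := norm_add_le (- amp 0 0 x y ^ 2 + amp 0 1 x y ^ 2 + amp 1 2 x y ^ 2)
      (amp 2 2 x y ^ 2)
  have h3 := norm_add_le (- amp 0 0 x y ^ 2 + amp 0 1 x y ^ 2) (amp 1 2 x y ^ 2)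
  have h4 := norm_add_le (- amp 0 0 x y ^ 2) (amp 0 1 x y ^ 2)
  simp only [norm_pow, norm_neg] at h1 h2 h3 h4
  linarith

/-- STATEMENT: `Z_{w,2} = Σ_{ij} [W2]_{ij} Π_i⊗Π_j` is an entanglement witness for
the partition A = (A',A''), B = (B',B''): `tr(Z_{w,2} ρ) ≥ 0` for every matrix `ρ`
separable across this partition. -/
theorem stmt6 (ρ : M16) (hρ : SepAB ρ) :
    0 ≤ ((∑ i, ∑ j, (W2 i j : ℂ) • (BellProj i ⊗ₖ BellProj j)) * ρ).trace := by
  obtain ⟨n, x, y, h⟩ := hρ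
  rw [rho_eq ρ x y h, Finset.mul_sum, trace_sum]
  refine Finset.sum_nonneg fun k _ => ?_
  simp only [bellkron, Finset.sum_mul, trace_sum, smul_mul_assoc, trace_smul, trace_rank1]
  have := amp_ineq (x k) (y k)
  have e : (∑ i, ∑ j, (W2 i j : ℂ) •
      ((‖star (bb i j) ⬝ᵥ pv (x k) (y k)‖ ^ 2 : ℝ) : ℂ)) =
      ((‖amp 0 0 (x k) (y k)‖ ^ 2 + ‖amp 0 1 (x k) (y k)‖ ^ 2 - ‖amp 0 3 (x k) (y k)‖ ^ 2
      + ‖amp 1 2 (x k) (y k)‖ ^ 2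
      + ‖amp 2 2 (x k) (y k)‖ ^ 2 + ‖amp 3 2 (x k) (y k)‖ ^ 2 : ℝ) : ℂ) := by
    simp [W2, Fin.sum_univ_four, amp]
    ring
  rw [e]
  exact_mod_cast this

end Paper
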